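/- For every real number a not of the form -j/2 with j a nonnegative integer, and every real z with 0 < z < 1: Φ_HCB(1,a,z) = (4^a / (C(2a,a)·a)) · ( z^{2a} / √(1-z²) ) · ₂F₁(1/2, a-1/2; a+1/2; z²). -/

import Mathlib

/-- The generalized binomial coefficient `C(x,y) = Γ(x+1)/(Γ(y+1) Γ(x-y+1))`. -/
noncomputable def genBinom (x y : ℝ) : ℝ :=
  Real.Gamma (x + 1) / (Real.Gamma (y + 1) * Real.Gamma (x - y + 1))

/-- The Hurwitz–Lerch type central binomial series
`Φ_HCB(s,a,z) = ∑_{n≥0} (2z)^{2(n+a)} / ( C(2(n+a), n+a) (n+a)^s )`. -/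
noncomputable def PhiHCB (s : ℤ) (a z : ℝ) : ℝ :=
  ∑' n : ℕ, (2 * z) ^ (2 * ((n : ℝ) + a)) /
    (genBinom (2 * ((n : ℝ) + a)) ((n : ℝ) + a) * ((n : ℝ) + a) ^ s)

/-- The shifted factorial (Pochhammer symbol) `(α)_n = α(α+1)⋯(α+n-1)`, `(α)_0 = 1`. -/
def poch (α : ℝ) : ℕ → ℝ
  | 0 => 1
  | n + 1 => poch α n * (α + n)

/-- The Gauss hypergeometric series `₂F₁(α,β;γ;z) = ∑_{n≥0} (α)_n (β)_n / ((γ)_n n!) zⁿ`. -/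
noncomputable def Gauss2F1 (α β γ z : ℝ) : ℝ :=
  ∑' n : ℕ, poch α n * poch β n / (poch γ n * (Nat.factorial n : ℝ)) * z ^ n

/-- The formal power series `∑ (1/2)_n / n! Xⁿ`, i.e. `(1 - X)^(-1/2)`. -/
noncomputable def invSqrtSeries : PowerSeries ℝ :=
  PowerSeries.mk fun n => poch (1 / 2) n / (Nat.factorial n : ℝ)

/-- The formal power series of `₂F₁(1/2, b; b + 1; X)`. -/
noncomputable def halfHypSeries (b : ℝ) : PowerSeries ℝ :=
  PowerSeries.mk fun n =>
    poch (1 / 2) n * poch b n / (poch (b + 1) n * (Nat.factorial n : ℝ))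

lemma poch_ne_zero {α : ℝ} (h : ∀ n : ℕ, α + n ≠ 0) (n : ℕ) : poch α n ≠ 0 := by
  induction n with
  | zero => simp [poch]
  | succ n ih => exact mul_ne_zero ih (h n)

lemma poch_mul_add (b : ℝ) (n : ℕ) : poch b n * (b + n) = b * poch (b + 1) n := by
  induction n with
  | zero => simp [poch]
  | succ n ih =>
    simp only [poch]
    rw [ih]
    push_cast
    ring

lemma coeff_invSqrtSeries_succ (n : ℕ) :
    (n + 1 : ℝ) * PowerSeries.coeff (n + 1) invSqrtSeries
      = (n + 1 / 2) * PowerSeries.coeff n invSqrtSeries := by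
  have h : (Nat.factorial n : ℝ) ≠ 0 := by positivity
  have h' : (n + 1 : ℝ) ≠ 0 := by positivity
  simp only [invSqrtSeries, PowerSeries.coeff_mk, poch, Nat.factorial_succ]
  push_cast
  field_simp
  ring

lemma coeff_invSqrtSeries_mem_Icc (n : ℕ) :
    PowerSeries.coeff n invSqrtSeries ∈ Set.Icc (0 : ℝ) 1 := by
  induction n with
  | zero => simp [invSqrtSeries, poch]
  | succ n ih =>
    have h := coeff_invSqrtSeries_succ n
    have hn : (0 : ℝ) ≤ n := by positivity
    obtain ⟨h0, h1⟩ := ih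
    constructor <;> by_contra! hc <;> nlinarith

lemma coeff_halfHypSeries {b : ℝ} (hb : ∀ n : ℕ, b + 1 + n ≠ 0) (n : ℕ) :
    (b + n) * PowerSeries.coeff n (halfHypSeries b)
      = b * PowerSeries.coeff n invSqrtSeries := by
  have h : (Nat.factorial n : ℝ) ≠ 0 := by positivity
  have h' := poch_ne_zero hb n
  have key := poch_mul_add b n
  simp only [invSqrtSeries, halfHypSeries, PowerSeries.coeff_mk]
  field_simp
  linear_combination poch (1 / 2) n * key

open PowerSeries in
lemma derivative_invSqrtSeries :
    (1 - X) * d⁄dX ℝ invSqrtSeries = C (1 / 2 : ℝ) * invSqrtSeries := by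
  ext n
  rw [sub_mul, one_mul, map_sub, coeff_C_mul, coeff_derivative]
  have h := coeff_invSqrtSeries_succ n
  cases n with
  | zero => simp at h ⊢; linarith
  | succ n =>
    rw [coeff_succ_X_mul, coeff_derivative]
    push_cast at h ⊢
    linarith

open PowerSeries in
lemma one_sub_X_mul_invSqrtSeries_sq : (1 - X) * (invSqrtSeries * invSqrtSeries) = 1 := by
  have hC : (C (1 / 2 : ℝ) : PowerSeries ℝ) * 2 = 1 := by
    rw [show (2 : PowerSeries ℝ) = C (2 : ℝ) from (map_ofNat C 2).symm, ← map_mul]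
    norm_num
  apply derivative.ext
  · simp only [Derivation.leibniz, map_sub, smul_eq_mul, derivative_X, Derivation.map_one_eq_zero]
    linear_combination 2 * invSqrtSeries * derivative_invSqrtSeries + invSqrtSeries ^ 2 * hC
  · simp [invSqrtSeries, poch]

open PowerSeries in
lemma derivative_halfHypSeries {b : ℝ} (hb : ∀ n : ℕ, b + 1 + n ≠ 0) :
    X * d⁄dX ℝ (halfHypSeries b) + C b * halfHypSeries b = C b * invSqrtSeries := by
  ext n
  have h := coeff_halfHypSeries hb n
  rw [map_add, coeff_C_mul, coeff_C_mul, ← h]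
  cases n with
  | zero => simp
  | succ n =>
    rw [coeff_succ_X_mul, coeff_derivative]
    push_cast
    ring

open PowerSeries in
/-- The formal Euler transformation `(1 - X)^(-1/2) ₂F₁(1/2, b; b+1; X) = ₂F₁(1, b+1/2; b+1; X)`. -/
lemma coeff_invSqrtSeries_mul_halfHypSeries {b : ℝ} (hb : ∀ n : ℕ, b + 1 + n ≠ 0) (n : ℕ) :
    coeff n (invSqrtSeries * halfHypSeries b) = poch (b + 1 / 2) n / poch (b + 1) n := by
  induction n with
  | zero => simp [invSqrtSeries, halfHypSeries, poch]
  | succ n ih =>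
    set S := invSqrtSeries * halfHypSeries b with hS
    have ode : X * d⁄dX ℝ S + C b * S - X * (X * d⁄dX ℝ S + C b * S)
        = X * (C (1 / 2) * S) + C b := by
      simp only [hS, Derivation.leibniz, smul_eq_mul]
      linear_combination X * halfHypSeries b * derivative_invSqrtSeries
        + (1 - X) * invSqrtSeries * derivative_halfHypSeries hb
        + C b * one_sub_X_mul_invSqrtSeries_sq
    have hc := congrArg (coeff (n + 1)) ode
    have hX : coeff n (X * d⁄dX ℝ S) = n * coeff n S := by
      cases n with
      | zero => simp
      | succ n => rw [coeff_succ_X_mul, coeff_derivative]; push_cast; ring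
    simp only [map_add, map_sub, coeff_succ_X_mul, coeff_C_mul, coeff_derivative, hX, coeff_C,
      Nat.succ_ne_zero, if_false, add_zero] at hc
    have h' := poch_ne_zero hb n
    have h1 := hb n
    rw [ih] at hc
    simp only [poch]
    apply mul_left_cancel₀ h1
    field_simp at hc ⊢
    linarith

lemma summable_norm_coeff_mul_pow {f : PowerSeries ℝ} {w : ℝ} (hw0 : 0 ≤ w) (hw1 : w < 1)
    (hf : ∀ᶠ n in Filter.atTop, |PowerSeries.coeff n f| ≤ 1) :
    Summable fun n => ‖PowerSeries.coeff n f * w ^ n‖ := by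
  refine (summable_geometric_of_lt_one hw0 hw1).of_norm_bounded_eventually_nat ?_
  filter_upwards [hf] with n hn
  rw [norm_norm, norm_mul, norm_pow, Real.norm_eq_abs, Real.norm_of_nonneg hw0]
  exact mul_le_of_le_one_left (by positivity) hn

lemma tsum_coeff_mul {f g : PowerSeries ℝ} {w : ℝ}
    (hf : Summable fun n => ‖PowerSeries.coeff n f * w ^ n‖)
    (hg : Summable fun n => ‖PowerSeries.coeff n g * w ^ n‖) :
    ∑' n, PowerSeries.coeff n (f * g) * w ^ n
      = (∑' n, PowerSeries.coeff n f * w ^ n) * ∑' n, PowerSeries.coeff n g * w ^ n := by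
  rw [tsum_mul_tsum_eq_tsum_sum_antidiagonal_of_summable_norm hf hg]
  refine tsum_congr fun n => ?_
  rw [PowerSeries.coeff_mul, Finset.sum_mul]
  refine Finset.sum_congr rfl fun p hp => ?_
  rw [← Finset.HasAntidiagonal.mem_antidiagonal.mp hp, pow_add]
  ring

lemma eventually_abs_coeff_halfHypSeries_le {b : ℝ} (hb : ∀ n : ℕ, b + 1 + n ≠ 0) :
    ∀ᶠ n in Filter.atTop, |PowerSeries.coeff n (halfHypSeries b)| ≤ 1 := by
  filter_upwards [Filter.eventually_ge_atTop (⌈2 * |b|⌉₊ + 1)] with n hn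
  have hn' : 2 * |b| + 1 ≤ n :=
    (add_le_add_left (Nat.le_ceil (2 * |b|)) 1).trans (by exact_mod_cast hn)
  have hpos : 0 < b + n := by linarith [neg_abs_le b, abs_nonneg b]
  obtain ⟨h0, h1⟩ := coeff_invSqrtSeries_mem_Icc n
  have h := congrArg abs (coeff_halfHypSeries hb n)
  rw [abs_mul, abs_mul, abs_of_pos hpos, abs_of_nonneg h0] at h
  refine le_of_mul_le_mul_left ?_ hpos
  rw [h, mul_one]
  linarith [neg_abs_le b, mul_le_of_le_one_right (abs_nonneg b) h1]

lemma summable_norm_invSqrtSeries {w : ℝ} (hw0 : 0 ≤ w) (hw1 : w < 1) :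
    Summable fun n => ‖PowerSeries.coeff n invSqrtSeries * w ^ n‖ :=
  summable_norm_coeff_mul_pow hw0 hw1 (.of_forall fun n => by
    obtain ⟨h0, h1⟩ := coeff_invSqrtSeries_mem_Icc n
    rwa [abs_of_nonneg h0])

lemma tsum_invSqrtSeries {w : ℝ} (hw0 : 0 ≤ w) (hw1 : w < 1) :
    ∑' n, PowerSeries.coeff n invSqrtSeries * w ^ n = 1 / √(1 - w) := by
  have hp := summable_norm_invSqrtSeries hw0 hw1
  have hinv : invSqrtSeries * invSqrtSeries = PowerSeries.mk fun _ => (1 : ℝ) := by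
    linear_combination (PowerSeries.mk fun _ => (1 : ℝ)) * one_sub_X_mul_invSqrtSeries_sq
      - invSqrtSeries * invSqrtSeries * PowerSeries.mk_one_mul_one_sub_eq_one ℝ
  have hsq := tsum_coeff_mul hp hp
  simp only [hinv, PowerSeries.coeff_mk, one_mul, tsum_geometric_of_lt_one hw0 hw1] at hsq
  have hnn : 0 ≤ ∑' n, PowerSeries.coeff n invSqrtSeries * w ^ n :=
    tsum_nonneg fun n => mul_nonneg (coeff_invSqrtSeries_mem_Icc n).1 (by positivity)
  rw [one_div, ← Real.sqrt_inv, hsq, Real.sqrt_mul_self hnn]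

/-- Euler's transformation `₂F₁(1, b+1/2; b+1; w) = (1 - w)^(-1/2) ₂F₁(1/2, b; b+1; w)`. -/
lemma tsum_poch_div_poch {b : ℝ} (hb : ∀ n : ℕ, b + 1 + n ≠ 0) {w : ℝ} (hw0 : 0 ≤ w)
    (hw1 : w < 1) :
    ∑' n, poch (b + 1 / 2) n / poch (b + 1) n * w ^ n
      = 1 / √(1 - w) * Gauss2F1 (1 / 2) b (b + 1) w := by
  have hp := summable_norm_invSqrtSeries hw0 hw1
  have hv := summable_norm_coeff_mul_pow hw0 hw1 (eventually_abs_coeff_halfHypSeries_le hb)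
  have h := tsum_coeff_mul hp hv
  simp only [coeff_invSqrtSeries_mul_halfHypSeries hb, tsum_invSqrtSeries hw0 hw1] at h
  rw [h, Gauss2F1]
  simp only [halfHypSeries, PowerSeries.coeff_mk]

lemma genBinom_central_succ {x : ℝ} (h1 : x + 1 ≠ 0) (h2 : 2 * x + 1 ≠ 0) :
    genBinom (2 * (x + 1)) (x + 1) * (x + 1) = 2 * (2 * x + 1) * genBinom (2 * x) x := by
  have h3 : 2 * x + 1 + 1 ≠ 0 := fun h => h1 (by linarith)
  simp only [genBinom]
  rw [show 2 * (x + 1) + 1 = (2 * x + 1 + 1) + 1 by ring,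
    show 2 * (x + 1) - (x + 1) + 1 = (x + 1) + 1 by ring, show 2 * x - x + 1 = x + 1 by ring,
    Real.Gamma_add_one h3, Real.Gamma_add_one h2, Real.Gamma_add_one h1]
  by_cases hG : Real.Gamma (x + 1) = 0
  · simp [hG]
  field_simp
  ring

/-- The terms of the series at `s = 1` as multiples of the first term. -/
lemma phiHCB_term_eq {a : ℝ} (ha : ∀ j : ℕ, a ≠ -(j : ℝ) / 2) {z : ℝ} (hz0 : 0 < z) (n : ℕ) :
    (2 * z) ^ (2 * ((n : ℝ) + a)) / (genBinom (2 * ((n : ℝ) + a)) ((n : ℝ) + a) * ((n : ℝ) + a))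
      = (2 * z) ^ (2 * a) / (genBinom (2 * a) a * a)
        * (poch a n / poch (a + 1 / 2) n * (z ^ 2) ^ n) := by
  have hhalf : ∀ m : ℕ, a + 1 / 2 + m ≠ 0 := fun m h =>
    ha (2 * m + 1) (by push_cast; linarith)
  induction n with
  | zero => simp [poch]
  | succ n ih =>
    have h0 : (n : ℝ) + a ≠ 0 := fun h => ha (2 * n) (by push_cast; linarith)
    have h1 : (n : ℝ) + a + 1 ≠ 0 := fun h => ha (2 * n + 2) (by push_cast; linarith)
    have h2 : 2 * ((n : ℝ) + a) + 1 ≠ 0 := fun h => ha (2 * n + 1) (by push_cast; linarith)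
    have hpow : (2 * z) ^ (2 * ((n : ℝ) + a + 1)) = (2 * z) ^ (2 * ((n : ℝ) + a)) * (4 * z ^ 2) := by
      rw [mul_add, Real.rpow_add (by positivity), mul_one, Real.rpow_two]
      ring
    rw [show ((n + 1 : ℕ) : ℝ) + a = n + a + 1 by push_cast; ring, hpow,
      genBinom_central_succ h1 h2]
    have step : (2 * z) ^ (2 * ((n : ℝ) + a)) * (4 * z ^ 2)
          / (2 * (2 * ((n : ℝ) + a) + 1) * genBinom (2 * ((n : ℝ) + a)) ((n : ℝ) + a))
        = (2 * z) ^ (2 * ((n : ℝ) + a))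
            / (genBinom (2 * ((n : ℝ) + a)) ((n : ℝ) + a) * ((n : ℝ) + a))
          * ((a + n) / (a + 1 / 2 + n) * z ^ 2) := by
      have h3 := hhalf n
      rw [show 2 * ((n : ℝ) + a) + 1 = 2 * (a + 1 / 2 + n) by ring, add_comm a (n : ℝ)]
      generalize genBinom (2 * ((n : ℝ) + a)) ((n : ℝ) + a) = B
      generalize (2 * z) ^ (2 * ((n : ℝ) + a)) = R
      generalize a + 1 / 2 + (n : ℝ) = D at *
      generalize (n : ℝ) + a = x at *
      by_cases hB : B = 0
      · simp [hB]
      field_simp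
      ring
    rw [step, ih]
    simp only [poch, pow_succ, div_eq_mul_inv, mul_inv]
    ring

/-- For every real `a` not of the form `-j/2` (`j ∈ ℤ_{≥0}`) and every real `z` with `0 < z < 1`:
`Φ_HCB(1,a,z) = (4^a/(C(2a,a) a)) (z^{2a}/√(1-z²)) ₂F₁(1/2, a-1/2; a+1/2; z²)`. -/
theorem phiHCB_one_hypergeometric (a : ℝ) (ha : ∀ j : ℕ, a ≠ -(j : ℝ) / 2)
    (z : ℝ) (hz0 : 0 < z) (hz1 : z < 1) :
    PhiHCB 1 a z =
      (4 : ℝ) ^ a / (genBinom (2 * a) a * a) * (z ^ (2 * a) / Real.sqrt (1 - z ^ 2)) *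
        Gauss2F1 (1 / 2) (a - 1 / 2) (a + 1 / 2) (z ^ 2) := by
  have hhalf : ∀ n : ℕ, a - 1 / 2 + 1 + n ≠ 0 := fun n h =>
    ha (2 * n + 1) (by push_cast; linarith)
  have key := tsum_poch_div_poch hhalf (sq_nonneg z) (by nlinarith : z ^ 2 < 1)
  rw [show a - 1 / 2 + 1 / 2 = a by ring, show a - 1 / 2 + 1 = a + 1 / 2 by ring] at key
  have hpow : (2 * z) ^ (2 * a) = 4 ^ a * z ^ (2 * a) := by
    rw [Real.mul_rpow (by norm_num) hz0.le, Real.rpow_mul (by norm_num)]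
    norm_num
  simp only [PhiHCB, zpow_one, phiHCB_term_eq ha hz0]
  rw [tsum_mul_left, key, hpow]
  ring
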